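/- There exists an element Sc ∈ Ω (the 'Scasimir') such that: (i) σ_a Sc + Sc σ_a = 0 for every 1 ≤ a ≤ 2n; (ii) σ_{ab} Sc = Sc σ_{ab} for all 1 ≤ a, b ≤ 2n, where σ_{ab} := σ_a σ_b + σ_b σ_a; and (iii) Sc − [1, n+1, 2, n+2, …, n, 2n] lies in the ℚ-linear span of the antisymmetrized monomials [a_1 … a_p] with p < 2n. -/

import Mathlib

open scoped BigOperators TensorProduct
open Nat

noncomputable section

/-- The symplectic metric `g` of `osp(1|2n)` (0-indexed). -/
def gmat (n : ℕ) (a b : Fin (2*n)) : ℚ :=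
  if (a:ℕ) < n ∧ (b:ℕ) = (a:ℕ) + n then -1
  else if (b:ℕ) < n ∧ (a:ℕ) = (b:ℕ) + n then 1
  else 0

/-- The defining relations of `U(osp(1|2n))`:
`(σₐσ_b + σ_bσₐ)σ_c - σ_c(σₐσ_b + σ_bσₐ) = -g_{ac} σ_b - g_{bc} σₐ`. -/
inductive OspRel (n : ℕ) : FreeAlgebra ℚ (Fin (2*n)) → FreeAlgebra ℚ (Fin (2*n)) → Prop
  | rel (a b c : Fin (2*n)) : OspRel n
      ((FreeAlgebra.ι ℚ a * FreeAlgebra.ι ℚ b + FreeAlgebra.ι ℚ b * FreeAlgebra.ι ℚ a)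
          * FreeAlgebra.ι ℚ c)
      (FreeAlgebra.ι ℚ c *
          (FreeAlgebra.ι ℚ a * FreeAlgebra.ι ℚ b + FreeAlgebra.ι ℚ b * FreeAlgebra.ι ℚ a)
        - algebraMap ℚ (FreeAlgebra ℚ (Fin (2*n))) (gmat n a c) * FreeAlgebra.ι ℚ b
        - algebraMap ℚ (FreeAlgebra ℚ (Fin (2*n))) (gmat n b c) * FreeAlgebra.ι ℚ a)

/-- The universal enveloping superalgebra `U(osp(1|2n))`. -/
abbrev U (n : ℕ) := RingQuot (OspRel n)

/-- The fermionic generators `σₐ`. -/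
def σ (n : ℕ) (a : Fin (2*n)) : U n :=
  RingQuot.mkAlgHom ℚ (OspRel n) (FreeAlgebra.ι ℚ a)

/-- The bosonic generators `σ_{ab} = σₐσ_b + σ_bσₐ`. -/
def σσ (n : ℕ) (a b : Fin (2*n)) : U n := σ n a * σ n b + σ n b * σ n a

/-- The antisymmetrized monomial `[a₁ … a_p]`. -/
def brkt (n : ℕ) (p : ℕ) (a : Fin p → Fin (2*n)) : U n :=
  ∑ s : Equiv.Perm (Fin p),
    (Equiv.Perm.sign s : ℤ) • (List.ofFn fun i => σ n (a (s i))).prod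

/-- `Ω`, the span of all the antisymmetrized monomials. -/
def Omega (n : ℕ) : Submodule ℚ (U n) :=
  Submodule.span ℚ {x | ∃ p, ∃ a : Fin p → Fin (2*n), x = brkt n p a}


/-- The span of the antisymmetrized monomials `[a₁ … a_p]` with `p < N`. -/
def lowBrkt (n : ℕ) (N : ℕ) : Submodule ℚ (U n) :=
  Submodule.span ℚ {x | ∃ p, p < N ∧ ∃ a : Fin p → Fin (2*n), x = brkt n p a}

/-- The tuple `(1, n+1, 2, n+2, …, n, 2n)` (0-indexed). -/
def topTuple (n : ℕ) : Fin (2*n) → Fin (2*n) := fun j =>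
  if (j:ℕ) % 2 = 0 then ⟨(j:ℕ)/2, by have := j.isLt; omega⟩
  else ⟨(j:ℕ)/2 + n, by have := j.isLt; omega⟩

/-!
Let `ξ_b` be Grassmann variables, `Θ = ∑ ξ_b ⊗ σ_b` and `ω = -∑ g_{bc} ξ_b ξ_c ⊗ 1`. In the algebra
generated by the `ξ_b` and `σ_b`, the relations say that the anticommutator `δ` with `Θ` satisfies
`δ² σ_a = ω σ_a + η Θ` with `η = ∑ g_{ac} ξ_c`, hence `δ³ = ω δ` on `σ_a`: the eigenvalues of `δ`
are `0` and `±√ω`. For `X_n = ∏_{j<n} (Θ² - (j + 1/2)² ω)`, whose roots in `Θ` are spaced by `√ω`,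
moving `X_n` past `σ_a` shifts these roots, and all terms recombine into
`∂_a (Θ X_n) = (n + 1/2) (σ_a X_n + X_n σ_a)`, where `∂_a` is the derivative in `ξ_a`. The Berezin
integral of a derivative vanishes, so `Sc = ∫ X_n` anticommutes with every `σ_a`. Finally `∫ Θ^{2n}`
is the top antisymmetrized monomial, while the other terms `ω^j Θ^p` of `X_n` have `p < 2n` and
integrate to combinations of antisymmetrized monomials of length `p`.
-/

section HalfIntProd

variable {K B : Type*} [Field K] [Ring B] [Algebra K B] {Θ ω m η : B}

variable (K) in
/-- The polynomial `∏_{j<k} (Θ² - (j + 1/2)² ω)`, whose integral over the Grassmann variables is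
the Scasimir. -/
def halfIntProd (Θ ω : B) : ℕ → B
  | 0 => 1
  | k + 1 => halfIntProd Θ ω k * (Θ * Θ - ((k : K) + 1 / 2) ^ 2 • ω)

theorem commute_halfIntProd {x : B} (hΘ : Commute x Θ) (hω : Commute x ω) (k : ℕ) :
    Commute x (halfIntProd K Θ ω k) := by
  induction k with
  | zero => exact Commute.one_right x
  | succ k ih => exact ih.mul_right ((hΘ.mul_right hΘ).sub_right (hω.smul_right _))

theorem halfIntProd_sub_pow_mem_span (h : Commute Θ ω) (k : ℕ) :
    halfIntProd K Θ ω k - Θ ^ (2 * k) ∈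
      Submodule.span K {x | ∃ j, ∃ p < 2 * k, x = ω ^ j * Θ ^ p} := by
  induction k with
  | zero => simp [halfIntProd]
  | succ k ih =>
    set F : ℕ → Submodule K B := fun N ↦ Submodule.span K {x | ∃ j, ∃ p < N, x = ω ^ j * Θ ^ p}
    have mul_sq_mem : F (2 * k) ≤ (F (2 * (k + 1))).comap (LinearMap.mulRight K (Θ * Θ)) := by
      refine Submodule.span_le.2 ?_
      rintro _ ⟨j, p, hp, rfl⟩
      exact Submodule.subset_span
        ⟨j, p + 2, by omega, by simp only [LinearMap.mulRight_apply, pow_add, sq, mul_assoc]⟩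
    have mul_mem : F (2 * k) ≤ (F (2 * (k + 1))).comap (LinearMap.mulLeft K ω) := by
      refine Submodule.span_le.2 ?_
      rintro _ ⟨j, p, hp, rfl⟩
      exact Submodule.subset_span
        ⟨j + 1, p, by omega, by simp only [LinearMap.mulLeft_apply, pow_add, pow_one, ←
          mul_assoc, ((Commute.refl ω).pow_right j).eq]⟩
    have mul_pow_mem : ω * Θ ^ (2 * k) ∈ F (2 * (k + 1)) :=
      Submodule.subset_span ⟨1, 2 * k, by omega, by rw [pow_one]⟩
    have expand : halfIntProd K Θ ω (k + 1) - Θ ^ (2 * (k + 1))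
        = (halfIntProd K Θ ω k - Θ ^ (2 * k)) * (Θ * Θ)
          - ((k : K) + 1 / 2) ^ 2 •
            (ω * (halfIntProd K Θ ω k - Θ ^ (2 * k)) + ω * Θ ^ (2 * k)) := by
      rw [halfIntProd, ← mul_add, sub_add_cancel,
        (commute_halfIntProd h.symm (Commute.refl ω) k).eq, mul_add, mul_one, pow_add, sq Θ,
        mul_sub, mul_smul_comm, sub_mul]
      abel
    rw [expand]
    exact sub_mem (mul_sq_mem ih) (Submodule.smul_mem _ _ (add_mem (mul_mem ih) mul_pow_mem))

/-- The operator by which left multiplication by `∏_{j<k} (Θ² - (j + 1/2)² ω)` turns into right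
multiplication by the next product, at `c = k + 1/2`. With `L`, `R` the operators
`m ↦ Θ m`, `m ↦ - m Θ` and `δ = L - R`, it is `(L - c δ) (R - c δ) + c² (δ² - ω)`. -/
def halfIntShift (Θ ω m : B) (c : K) : B :=
  c • (m * Θ * Θ - Θ * Θ * m) - Θ * m * Θ - c ^ 2 • (ω * m)
    + (2 * c ^ 2) • (Θ * (Θ * m + m * Θ) + (Θ * m + m * Θ) * Θ)

-- If `δ² m = ω m`, both sides are `(L - c δ) (L + c δ) (R - c δ) (R - (c + 1) δ) m`.
theorem mul_halfIntShift_add_one (hΘω : Commute Θ ω) (hmω : Commute m ω)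
    (hm : Θ * Θ * Θ * m + (3 : K) • (Θ * Θ * m * Θ) + (3 : K) • (Θ * m * Θ * Θ) + m * Θ * Θ * Θ
      = ω * (Θ * m + m * Θ)) (c : K) :
    (Θ * Θ - c ^ 2 • ω) * halfIntShift Θ ω m (c + 1)
      = halfIntShift Θ ω m c * (Θ * Θ - (c + 1) ^ 2 • ω) := by
  have hleft := congrArg (fun x ↦ ((2 * c + 1) * (c + 1)) • (Θ * x)) hm
  have hright := congrArg (fun x ↦ ((2 * c + 1) * c) • (x * Θ)) hm
  simp only [halfIntShift, mul_add, add_mul, mul_sub, sub_mul, smul_mul_assoc, mul_smul_comm,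
    mul_assoc, hΘω.left_comm, hmω.left_comm, hΘω.eq, hmω.eq] at hleft hright ⊢
  linear_combination (norm := module) hleft - hright

theorem halfIntProd_mul_halfIntShift [CharZero K] (hΘω : Commute Θ ω) (hmω : Commute m ω)
    (hm : Θ * Θ * Θ * m + (3 : K) • (Θ * Θ * m * Θ) + (3 : K) • (Θ * m * Θ * Θ) + m * Θ * Θ * Θ
      = ω * (Θ * m + m * Θ)) (k : ℕ) :
    halfIntProd K Θ ω k * halfIntShift Θ ω m ((k : K) + 1 / 2)
      = m * halfIntProd K Θ ω (k + 1) := by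
  induction k with
  | zero =>
    simp only [halfIntProd, halfIntShift, mul_sub, mul_add, add_mul, mul_assoc, mul_smul_comm,
      hmω.eq, one_mul, Nat.cast_zero]
    module
  | succ k ih =>
    have hc : ((k + 1 : ℕ) : K) + 1 / 2 = ((k : K) + 1 / 2) + 1 := by push_cast; ring
    calc halfIntProd K Θ ω (k + 1) * halfIntShift Θ ω m (((k + 1 : ℕ) : K) + 1 / 2)
        = halfIntProd K Θ ω k * halfIntShift Θ ω m ((k : K) + 1 / 2)
            * (Θ * Θ - (((k + 1 : ℕ) : K) + 1 / 2) ^ 2 • ω) := by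
          rw [halfIntProd, mul_assoc, hc, mul_halfIntShift_add_one hΘω hmω hm, mul_assoc]
      _ = m * halfIntProd K Θ ω (k + 1 + 1) := by
          rw [ih, mul_assoc, ← halfIntProd]

theorem triple_anticommutator_eq (hΘω : Commute Θ ω) (hηΘ : η * Θ = -(Θ * η))
    (hm : Θ * (Θ * m + m * Θ) + (Θ * m + m * Θ) * Θ = ω * m + η * Θ) :
    Θ * Θ * Θ * m + (3 : K) • (Θ * Θ * m * Θ) + (3 : K) • (Θ * m * Θ * Θ) + m * Θ * Θ * Θ
      = ω * (Θ * m + m * Θ) := by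
  have hΘ : Θ * (η * Θ) + η * Θ * Θ = 0 := by
    rw [hηΘ, neg_mul, mul_assoc, hηΘ]; noncomm_ring
  have h := congrArg (fun x ↦ Θ * x + x * Θ) hm
  simp only [mul_add, add_mul, mul_assoc, hΘω.left_comm] at h hΘ ⊢
  linear_combination (norm := module) h + hΘ

-- With `X` the product at `k`, `c = k + 1/2` and `Q = Θ² - c² ω`, and after cancelling `c m X Q`,
-- this is `X (halfIntShift c) = m X Q`.
theorem halfIntProd_succ_anticommutator [CharZero K] (hΘω : Commute Θ ω) (hmω : Commute m ω)
    (hηΘ : η * Θ = -(Θ * η))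
    (hm : Θ * (Θ * m + m * Θ) + (Θ * m + m * Θ) * Θ = ω * m + η * Θ) (k : ℕ) :
    ((k + 1 : ℕ) + 1 / 2 : K) • (m * halfIntProd K Θ ω (k + 1) + halfIntProd K Θ ω (k + 1) * m)
      = ((k : K) + 1 / 2) • ((m * halfIntProd K Θ ω k + halfIntProd K Θ ω k * m)
          * (Θ * Θ - ((k : K) + 1 / 2) ^ 2 • ω))
        - Θ * halfIntProd K Θ ω k * (m * Θ - Θ * m + (2 * ((k : K) + 1 / 2) ^ 2) • η) := by
  have hshift := halfIntProd_mul_halfIntShift hΘω hmω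
    (triple_anticommutator_eq (K := K) hΘω hηΘ hm) k
  have hc : ((k + 1 : ℕ) : K) + 1 / 2 = ((k : K) + 1 / 2) + 1 := by push_cast; ring
  have hX : Θ * halfIntProd K Θ ω k = halfIntProd K Θ ω k * Θ :=
    commute_halfIntProd (Commute.refl Θ) hΘω k
  rw [hc]
  set c : K := (k : K) + 1 / 2
  have hη := congrArg (fun x ↦ (2 * c ^ 2) • (halfIntProd K Θ ω k * x)) hm
  rw [hX]
  simp only [halfIntProd, halfIntShift, hηΘ] at hshift hη ⊢
  simp only [mul_add, add_mul, mul_sub, sub_mul, smul_mul_assoc, mul_smul_comm, mul_assoc,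
    mul_neg, hmω.eq] at hshift hη ⊢
  linear_combination (norm := module) - hshift + hη

theorem map_mul_halfIntProd [CharZero K] {d : B →ₗ[K] B} (hΘω : Commute Θ ω) (hmω : Commute m ω)
    (hηΘ : η * Θ = -(Θ * η)) (hdΘ : ∀ y, d (Θ * y) = m * y - Θ * d y)
    (hdω : ∀ y, d (ω * y) = ω * d y - (2 : K) • (η * y))
    (hm : Θ * (Θ * m + m * Θ) + (Θ * m + m * Θ) * Θ = ω * m + η * Θ) (k : ℕ) (y : B) :
    d (Θ * halfIntProd K Θ ω k * y)
      = ((k : K) + 1 / 2) • ((m * halfIntProd K Θ ω k + halfIntProd K Θ ω k * m) * y)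
        - Θ * halfIntProd K Θ ω k * d y := by
  induction k generalizing y with
  | zero =>
    simp only [halfIntProd, mul_one, one_mul, hdΘ, add_mul, Nat.cast_zero]
    module
  | succ k ih =>
    have hdQ (c : K) : d ((Θ * Θ - c ^ 2 • ω) * y)
        = (Θ * Θ - c ^ 2 • ω) * d y + (m * Θ - Θ * m + (2 * c ^ 2) • η) * y := by
      simp only [sub_mul, add_mul, smul_mul_assoc, map_sub, map_smul, mul_assoc, hdΘ, hdω, mul_sub]
      module
    have hsucc (z : B) : Θ * halfIntProd K Θ ω (k + 1) * z
        = Θ * halfIntProd K Θ ω k * ((Θ * Θ - ((k : K) + 1 / 2) ^ 2 • ω) * z) := by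
      simp only [halfIntProd, mul_assoc]
    rw [hsucc, hsucc, ih, hdQ, ← smul_mul_assoc _ _ y,
      halfIntProd_succ_anticommutator hΘω hmω hηΘ hm]
    generalize Θ * Θ - ((k : K) + 1 / 2) ^ 2 • ω = Q
    rw [sub_mul, smul_mul_assoc, mul_assoc _ Q y, mul_assoc _ _ y, mul_add]
    abel

end HalfIntProd

section Exterior

variable {R V : Type*} [CommRing R] [AddCommGroup V] [Module R V]

theorem contractLeft_ιMulti_succ_mem (d : Module.Dual R V) {p : ℕ} (v : Fin (p + 1) → V) :
    CliffordAlgebra.contractLeft (Q := 0) d (ExteriorAlgebra.ιMulti R (p + 1) v) ∈ ⋀[R]^p V := by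
  have smul_mem {q : ℕ} (c : R) (w : Fin q → V) : c • ExteriorAlgebra.ιMulti R q w ∈ ⋀[R]^q V :=
    Submodule.smul_mem _ _ (ExteriorAlgebra.ιMulti_range R q ⟨w, rfl⟩)
  rw [ExteriorAlgebra.ιMulti_succ_apply, CliffordAlgebra.contractLeft_ι_mul]
  refine sub_mem (smul_mem _ _) ?_
  induction p with
  | zero => simp [CliffordAlgebra.contractLeft_one]
  | succ p ih =>
    rw [ExteriorAlgebra.ιMulti_succ_apply, CliffordAlgebra.contractLeft_ι_mul,
      ExteriorAlgebra.exteriorPower, _root_.pow_succ']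
    exact Submodule.mul_mem_mul ⟨_, rfl⟩ (sub_mem (smul_mem _ _) (ih _))

theorem exteriorPower_le_ker_liftAlternating_single {W : Type*} [AddCommGroup W] [Module R W]
    {p q : ℕ} (h : p ≠ q) (f : V [⋀^Fin q]→ₗ[R] W) :
    ⋀[R]^p V ≤ LinearMap.ker (ExteriorAlgebra.liftAlternating (Pi.single q f)) := by
  rw [← ExteriorAlgebra.ιMulti_span_fixedDegree, Submodule.span_le]
  rintro _ ⟨v, rfl⟩
  rw [SetLike.mem_coe, LinearMap.mem_ker, ExteriorAlgebra.liftAlternating_apply_ιMulti,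
    Pi.single_eq_of_ne h, AlternatingMap.zero_apply]

end Exterior

/-- The Grassmann algebra on generators indexed by `ι`. -/
abbrev Grassmann (K ι : Type*) [Field K] : Type _ := ExteriorAlgebra K (ι → K)

namespace Grassmann

variable {K ι : Type*} [Field K]

variable (K) in
/-- The left derivative with respect to a Grassmann generator. -/
def leftDeriv (a : ι) : Grassmann K ι →ₗ[K] Grassmann K ι :=
  CliffordAlgebra.contractLeft (Q := 0) (LinearMap.proj a)

theorem leftDeriv_one (a : ι) : leftDeriv K a 1 = 0 :=
  CliffordAlgebra.contractLeft_one _ _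

/-- The Berezin integral over all Grassmann variables, normalized by `∫ ξ_{e 0} ⋯ ξ_{e (N-1)} = 1`:
the coefficient of the top monomial. -/
def berezin [Fintype ι] {N : ℕ} (e : Fin N ≃ ι) : Grassmann K ι →ₗ[K] K :=
  ExteriorAlgebra.liftAlternating (Pi.single N ((Pi.basisFun K ι).reindex e.symm).det)

theorem berezin_leftDeriv [Fintype ι] {N : ℕ} (e : Fin N ≃ ι) (a : ι) (x : Grassmann K ι) :
    berezin e (leftDeriv K a x) = 0 := by
  suffices h : berezin e ∘ₗ leftDeriv K a = 0 from LinearMap.congr_fun h x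
  refine ExteriorAlgebra.lhom_ext fun p ↦ AlternatingMap.ext fun v ↦ ?_
  change berezin e (leftDeriv K a (ExteriorAlgebra.ιMulti K p v)) = 0
  obtain _ | p := p
  · rw [ExteriorAlgebra.ιMulti_zero_apply, leftDeriv_one, map_zero]
  obtain rfl | hp := eq_or_ne p N
  · have hv : ¬LinearIndependent K v := fun h ↦ by
      simpa [Fintype.card_congr e.symm] using h.fintype_card_le_finrank
    rw [AlternatingMap.map_linearDependent _ _ hv, map_zero, map_zero]
  · exact exteriorPower_le_ker_liftAlternating_single hp _ (contractLeft_ιMulti_succ_mem _ v)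

variable [DecidableEq ι]

variable (K) in
/-- The anticommuting generators `ξ_b` of the Grassmann algebra. -/
def gen (b : ι) : Grassmann K ι :=
  ExteriorAlgebra.ι K (Pi.single b 1)

variable (K) in
/-- The Grassmann monomial `ξ_{a 0} ⋯ ξ_{a (p-1)}` attached to a tuple of indices. -/
def word {p : ℕ} (a : Fin p → ι) : Grassmann K ι :=
  ExteriorAlgebra.ιMulti K p fun i ↦ Pi.single (a i) 1

/-- The quadratic element `ω = -∑ g_{bc} ξ_b ξ_c` attached to a bilinear form `g`. -/
def quad [Fintype ι] (g : ι → ι → K) : Grassmann K ι := -∑ b, ∑ c, g b c • (gen K b * gen K c)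

theorem gen_mul_gen (b c : ι) : gen K b * gen K c = -(gen K c * gen K b) :=
  eq_neg_of_add_eq_zero_left (ExteriorAlgebra.ι_add_mul_swap _ _)

theorem word_cons {p : ℕ} (b : ι) (a : Fin p → ι) :
    word K (Fin.cons b a : Fin (p + 1) → ι) = gen K b * word K a := by
  rw [word, ExteriorAlgebra.ιMulti_succ_apply]
  rfl

theorem word_comp_perm {p : ℕ} (a : Fin p → ι) (t : Equiv.Perm (Fin p)) :
    word K (a ∘ t) = (Equiv.Perm.sign t : ℤ) • word K a :=
  (ExteriorAlgebra.ιMulti K p (M := ι → K)).map_perm (fun i ↦ Pi.single (a i) 1) t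

theorem word_eq_zero {p : ℕ} {a : Fin p → ι} (ha : ¬Function.Injective a) : word K a = 0 :=
  ExteriorAlgebra.ιMulti_eq_zero_of_not_inj fun h ↦ ha fun i j hij ↦ h (by simp only [hij])

theorem leftDeriv_gen_mul (a b : ι) (x : Grassmann K ι) :
    leftDeriv K a (gen K b * x) = (if a = b then x else 0) - gen K b * leftDeriv K a x := by
  rw [leftDeriv, gen, ExteriorAlgebra.ι, CliffordAlgebra.contractLeft_ι_mul, LinearMap.proj_apply,
    Pi.single_apply, ite_smul, one_smul, zero_smul]

variable [Fintype ι]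

theorem commute_gen_quad (d : ι) (g : ι → ι → K) : Commute (gen K d) (quad g) := by
  have h (b c : ι) : Commute (gen K d) (gen K b * gen K c) := by
    rw [commute_iff_eq, ← mul_assoc, gen_mul_gen, neg_mul, mul_assoc, gen_mul_gen d c, mul_neg,
      neg_neg, mul_assoc]
  exact (Commute.sum_right _ _ _ fun b _ ↦
    Commute.sum_right _ _ _ fun c _ ↦ (h b c).smul_right _).neg_right

theorem leftDeriv_quad_mul {g : ι → ι → K} (hg : ∀ b c, g c b = -g b c) (a : ι)
    (x : Grassmann K ι) : leftDeriv K a (quad g * x)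
      = quad g * leftDeriv K a x - (2 : K) • ((∑ c, g a c • gen K c) * x) := by
  have leftDeriv_gen_mul_gen_mul (b c : ι) : leftDeriv K a (gen K b * gen K c * x)
      = gen K b * gen K c * leftDeriv K a x
        + ((if a = b then gen K c * x else 0) - if a = c then gen K b * x else 0) := by
    rw [mul_assoc, leftDeriv_gen_mul, leftDeriv_gen_mul, mul_sub, mul_ite, mul_zero, mul_assoc]
    abel
  have sum_left : ∑ b, ∑ c, g b c • (if a = b then gen K c * x else 0)
      = ∑ c, g a c • (gen K c * x) := by
    rw [Finset.sum_comm]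
    simp only [smul_ite, smul_zero, Finset.sum_ite_eq, Finset.mem_univ, if_true]
  have sum_right : ∑ b, ∑ c, g b c • (if a = c then gen K b * x else 0)
      = -∑ c, g a c • (gen K c * x) := by
    simp only [smul_ite, smul_zero, Finset.sum_ite_eq, Finset.mem_univ, if_true, hg a, neg_smul,
      Finset.sum_neg_distrib]
  simp only [quad, neg_mul, Finset.sum_mul, smul_mul_assoc, map_neg, map_sum, map_smul,
    leftDeriv_gen_mul_gen_mul, smul_add, smul_sub, Finset.sum_add_distrib, Finset.sum_sub_distrib,
    sum_left, sum_right]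
  module

theorem berezin_word {N : ℕ} (e : Fin N ≃ ι) : berezin e (word K e) = 1 := by
  rw [berezin, word, ExteriorAlgebra.liftAlternating_apply_ιMulti, Pi.single_eq_same]
  convert ((Pi.basisFun K ι).reindex e.symm).det_self with i
  simp

end Grassmann

/-- The antisymmetrized product `∑_t sign(t) v_{t(1)} ⋯ v_{t(p)}` of a tuple. -/
def skewProd {A : Type*} [Ring A] {p : ℕ} (v : Fin p → A) : A :=
  ∑ t : Equiv.Perm (Fin p), (Equiv.Perm.sign t : ℤ) • (List.ofFn fun i ↦ v (t i)).prod

section SkewSpan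

variable (K : Type*) {ι A : Type*} [CommRing K] [Ring A] [Algebra K A] (s : ι → A)

/-- The span of the antisymmetrized products of a family `s`, generalizing `Omega`. -/
def skewSpan : Submodule K A :=
  Submodule.span K {x | ∃ p, ∃ a : Fin p → ι, x = skewProd (s ∘ a)}

/-- The span of the antisymmetrized products of fewer than `N` members of a family `s`,
generalizing `lowBrkt`. -/
def skewSpanLT (N : ℕ) : Submodule K A :=
  Submodule.span K {x | ∃ p, p < N ∧ ∃ a : Fin p → ι, x = skewProd (s ∘ a)}

theorem skewSpanLT_le_skewSpan (N : ℕ) : skewSpanLT K s N ≤ skewSpan K s :=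
  Submodule.span_mono fun _ ⟨p, _, a, h⟩ ↦ ⟨p, a, h⟩

end SkewSpan

section Slice

variable {K A V : Type*} [CommRing K] [Ring A] [Algebra K A]

/-- Evaluation of a functional on the left tensor factor. With the Berezin integral as functional,
this integrates out the Grassmann variables. -/
def slice [AddCommGroup V] [Module K V] (f : V →ₗ[K] K) : V ⊗[K] A →ₗ[K] A :=
  TensorProduct.lid K A ∘ₗ f.rTensor A

theorem slice_tmul [AddCommGroup V] [Module K V] (f : V →ₗ[K] K) (v : V) (x : A) :
    slice f (v ⊗ₜ[K] x) = f v • x :=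
  TensorProduct.lid_tmul _ _

theorem slice_rTensor [AddCommGroup V] [Module K V] (f : V →ₗ[K] K) (d : V →ₗ[K] V)
    (y : V ⊗[K] A) : slice f (d.rTensor A y) = slice (f ∘ₗ d) y := by
  rw [slice, slice, LinearMap.rTensor_comp]
  rfl

variable [Ring V] [Algebra K V] (f : V →ₗ[K] K)

theorem slice_tmul_one_mul (w : V) (y : V ⊗[K] A) :
    slice f ((w ⊗ₜ[K] (1 : A)) * y) = slice (f ∘ₗ LinearMap.mulLeft K w) y := by
  induction y with
  | zero => simp only [mul_zero, map_zero]
  | add y z hy hz => simp only [mul_add, map_add, hy, hz]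
  | tmul v x =>
    rw [Algebra.TensorProduct.tmul_mul_tmul, slice_tmul, slice_tmul, one_mul,
      LinearMap.comp_apply, LinearMap.mulLeft_apply]

theorem slice_one_tmul_mul (x : A) (y : V ⊗[K] A) :
    slice f (((1 : V) ⊗ₜ[K] x) * y) = x * slice f y := by
  induction y with
  | zero => simp only [mul_zero, map_zero]
  | add y z hy hz => simp only [mul_add, map_add, hy, hz]
  | tmul v z =>
    rw [Algebra.TensorProduct.tmul_mul_tmul, slice_tmul, slice_tmul, one_mul, mul_smul_comm]

theorem slice_mul_one_tmul (x : A) (y : V ⊗[K] A) :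
    slice f (y * ((1 : V) ⊗ₜ[K] x)) = slice f y * x := by
  induction y with
  | zero => simp only [zero_mul, map_zero]
  | add y z hy hz => simp only [add_mul, map_add, hy, hz]
  | tmul v z =>
    rw [Algebra.TensorProduct.tmul_mul_tmul, slice_tmul, slice_tmul, mul_one, smul_mul_assoc]

end Slice

/-- The relations of `OspRel`, for a family `s` in an arbitrary algebra and an arbitrary matrix
`g`. -/
def OspRelations {K ι A : Type*} [CommRing K] [Ring A] [Algebra K A] (g : ι → ι → K)
    (s : ι → A) : Prop :=
  ∀ a b c, (s a * s b + s b * s a) * s c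
    = s c * (s a * s b + s b * s a) - g a c • s b - g b c • s a

section GenericElt

open Grassmann

variable {K ι A : Type*} [Field K] [Fintype ι] [DecidableEq ι] [Ring A] [Algebra K A]

variable (K) in
/-- The generic odd element `Θ = ∑ ξ_b ⊗ s_b`, whose powers are generating functions for the
antisymmetrized products of the `s_b`. -/
def genericElt (s : ι → A) : Grassmann K ι ⊗[K] A :=
  ∑ b, gen K b ⊗ₜ[K] s b

theorem genericElt_pow (s : ι → A) (p : ℕ) :
    genericElt K s ^ p = ∑ a : Fin p → ι, word K a ⊗ₜ[K] (List.ofFn fun i ↦ s (a i)).prod := by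
  induction p with
  | zero => simp [word, Algebra.TensorProduct.one_def]
  | succ p ih =>
    rw [_root_.pow_succ', ih, genericElt, Finset.sum_mul_sum, ← Fintype.sum_prod_type',
      ← (Fin.consEquiv fun _ ↦ ι).sum_comp]
    refine Finset.sum_congr rfl fun x _ ↦ ?_
    simp [Fin.consEquiv, word_cons, List.ofFn_succ, Algebra.TensorProduct.tmul_mul_tmul]

theorem factorial_smul_genericElt_pow (s : ι → A) (p : ℕ) :
    (p ! : K) • genericElt K s ^ p = ∑ a : Fin p → ι, word K a ⊗ₜ[K] skewProd (s ∘ a) := by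
  have reindex (t : Equiv.Perm (Fin p)) : genericElt K s ^ p
      = ∑ a : Fin p → ι,
          word K a ⊗ₜ[K] ((Equiv.Perm.sign t : ℤ) • (List.ofFn fun i ↦ s (a (t i))).prod) := by
    rw [genericElt_pow, ← (t.symm.arrowCongr (Equiv.refl ι)).sum_comp]
    refine Finset.sum_congr rfl fun a _ ↦ ?_
    change word K (a ∘ t) ⊗ₜ[K] (List.ofFn fun i ↦ s (a (t i))).prod = _
    rw [word_comp_perm, TensorProduct.smul_tmul]
  simp only [skewProd, TensorProduct.tmul_sum, Function.comp_apply]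
  rw [Finset.sum_comm, ← Finset.sum_congr rfl fun t _ ↦ reindex t, Finset.sum_const,
    Finset.card_univ, Fintype.card_perm, Fintype.card_fin, Nat.cast_smul_eq_nsmul]

theorem slice_genericElt_pow_mem [CharZero K] (f : Grassmann K ι →ₗ[K] K) (s : ι → A) {p N : ℕ}
    (h : p < N) : slice f (genericElt K s ^ p) ∈ skewSpanLT K s N := by
  have hp : (p ! : K) ≠ 0 := Nat.cast_ne_zero.2 p.factorial_ne_zero
  rw [← inv_smul_smul₀ hp (genericElt K s ^ p), factorial_smul_genericElt_pow, map_smul, map_sum]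
  refine Submodule.smul_mem _ _ (Submodule.sum_mem _ fun a _ ↦ ?_)
  rw [slice_tmul]
  exact Submodule.smul_mem _ _ (Submodule.subset_span ⟨p, h, a, rfl⟩)

theorem genericElt_pow_card {N : ℕ} (e : Fin N ≃ ι) (s : ι → A) :
    genericElt K s ^ N = word K e ⊗ₜ[K] skewProd (s ∘ e) := by
  rw [genericElt_pow, skewProd, TensorProduct.tmul_sum]
  symm
  refine Finset.sum_of_injOn (fun t : Equiv.Perm (Fin N) ↦ e ∘ t) ?_ ?_ ?_ ?_
  · exact fun t _ u _ h ↦ DFunLike.coe_injective (e.injective.comp_left h)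
  · exact fun t _ ↦ Finset.mem_coe.2 (Finset.mem_univ _)
  · intro a _ ha
    rw [word_eq_zero, TensorProduct.zero_tmul]
    intro hinj
    have hbij := (Fintype.bijective_iff_injective_and_card a).2 ⟨hinj, Fintype.card_congr e⟩
    exact ha ⟨(Equiv.ofBijective a hbij).trans e.symm, Finset.mem_coe.2 (Finset.mem_univ _),
      funext fun i ↦ e.apply_symm_apply (a i)⟩
  · intro t _
    simp only [word_comp_perm, TensorProduct.smul_tmul, Function.comp_apply]

variable {g : ι → ι → K} {s : ι → A}

theorem commute_genericElt_quad : Commute (genericElt K s) (quad g ⊗ₜ[K] 1) :=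
  Commute.sum_left _ _ _ fun b _ ↦ by
    simp only [commute_iff_eq, Algebra.TensorProduct.tmul_mul_tmul, (commute_gen_quad b g).eq,
      mul_one, one_mul]

theorem sum_gen_mul_genericElt (v : ι → K) :
    (∑ c, v c • gen K c) ⊗ₜ[K] 1 * genericElt K s
      = -(genericElt K s * (∑ c, v c • gen K c) ⊗ₜ[K] 1) := by
  have anticomm (b : ι) : (∑ c, v c • gen K c) * gen K b = -(gen K b * ∑ c, v c • gen K c) := by
    simp only [Finset.sum_mul, Finset.mul_sum, smul_mul_assoc, mul_smul_comm, gen_mul_gen _ b,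
      smul_neg, Finset.sum_neg_distrib]
  simp only [genericElt, Finset.mul_sum, Finset.sum_mul, Algebra.TensorProduct.tmul_mul_tmul,
    anticomm, one_mul, mul_one, TensorProduct.neg_tmul, Finset.sum_neg_distrib]

theorem rTensor_leftDeriv_genericElt_mul (a : ι) (y : Grassmann K ι ⊗[K] A) :
    (leftDeriv K a).rTensor A (genericElt K s * y)
      = 1 ⊗ₜ[K] s a * y - genericElt K s * (leftDeriv K a).rTensor A y := by
  induction y with
  | zero => simp only [mul_zero, map_zero, sub_zero]
  | add y z hy hz => rw [mul_add, map_add, hy, hz, map_add, mul_add, mul_add]; abel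
  | tmul w x =>
    simp only [genericElt, Finset.sum_mul, Algebra.TensorProduct.tmul_mul_tmul, map_sum,
      LinearMap.rTensor_tmul, leftDeriv_gen_mul, TensorProduct.sub_tmul, Finset.sum_sub_distrib,
      TensorProduct.ite_tmul, Finset.sum_ite_eq, Finset.mem_univ, if_true, one_mul]

theorem rTensor_leftDeriv_quad_mul (hg : ∀ b c, g c b = -g b c) (a : ι)
    (y : Grassmann K ι ⊗[K] A) : (leftDeriv K a).rTensor A (quad g ⊗ₜ[K] 1 * y)
      = quad g ⊗ₜ[K] 1 * (leftDeriv K a).rTensor A y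
        - (2 : K) • ((∑ c, g a c • gen K c) ⊗ₜ[K] 1 * y) := by
  induction y with
  | zero => simp only [mul_zero, map_zero, smul_zero, sub_zero]
  | add y z hy hz => rw [mul_add, map_add, hy, hz, map_add, mul_add, mul_add]; module
  | tmul w x =>
    simp only [Algebra.TensorProduct.tmul_mul_tmul, LinearMap.rTensor_tmul, leftDeriv_quad_mul hg,
      TensorProduct.sub_tmul, TensorProduct.smul_tmul', one_mul]

theorem genericElt_double_anticommutator (hs : OspRelations g s) (a : ι) :
    genericElt K s * (genericElt K s * 1 ⊗ₜ[K] s a + 1 ⊗ₜ[K] s a * genericElt K s)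
        + (genericElt K s * 1 ⊗ₜ[K] s a + 1 ⊗ₜ[K] s a * genericElt K s) * genericElt K s
      = quad g ⊗ₜ[K] 1 * 1 ⊗ₜ[K] s a + (∑ c, g a c • gen K c) ⊗ₜ[K] 1 * genericElt K s := by
  have anticomm : genericElt K s * 1 ⊗ₜ[K] s a + 1 ⊗ₜ[K] s a * genericElt K s
      = ∑ b, gen K b ⊗ₜ[K] (s b * s a + s a * s b) := by
    simp only [genericElt, Finset.sum_mul, Finset.mul_sum, Algebra.TensorProduct.tmul_mul_tmul,
      mul_one, one_mul, TensorProduct.tmul_add, Finset.sum_add_distrib]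
  have swap : genericElt K s * ∑ b, gen K b ⊗ₜ[K] (s b * s a + s a * s b)
      = ∑ b, ∑ c, -((gen K b * gen K c) ⊗ₜ[K] (s c * (s b * s a + s a * s b))) := by
    rw [genericElt, Finset.sum_mul_sum, Finset.sum_comm]
    refine Finset.sum_congr rfl fun b _ ↦ Finset.sum_congr rfl fun c _ ↦ ?_
    rw [Algebra.TensorProduct.tmul_mul_tmul, gen_mul_gen c b, TensorProduct.neg_tmul]
  have straighten (b c : ι) : -((gen K b * gen K c) ⊗ₜ[K] (s c * (s b * s a + s a * s b)))
      + (gen K b * gen K c) ⊗ₜ[K] ((s b * s a + s a * s b) * s c)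
      = -((g b c • (gen K b * gen K c)) ⊗ₜ[K] s a) + (g a c • (gen K c * gen K b)) ⊗ₜ[K] s b := by
    rw [hs, gen_mul_gen c b, TensorProduct.tmul_sub, TensorProduct.tmul_sub]
    simp only [TensorProduct.smul_tmul, TensorProduct.neg_tmul, smul_neg]
    abel
  have quad_mul : (quad g : Grassmann K ι) ⊗ₜ[K] (1 : A) * 1 ⊗ₜ[K] s a
      = ∑ b, ∑ c, -((g b c • (gen K b * gen K c)) ⊗ₜ[K] s a) := by
    rw [Algebra.TensorProduct.tmul_mul_tmul, mul_one, one_mul]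
    simp only [quad, TensorProduct.neg_tmul, TensorProduct.sum_tmul, Finset.sum_neg_distrib]
  have sum_gen_mul : (∑ c, g a c • gen K c) ⊗ₜ[K] 1 * genericElt K s
      = ∑ b, ∑ c, (g a c • (gen K c * gen K b)) ⊗ₜ[K] s b := by
    simp only [genericElt, Finset.mul_sum, Finset.sum_mul, Algebra.TensorProduct.tmul_mul_tmul,
      TensorProduct.sum_tmul, one_mul, smul_mul_assoc]
  rw [anticomm, swap, quad_mul, sum_gen_mul, genericElt, Finset.sum_mul_sum]
  simp only [Algebra.TensorProduct.tmul_mul_tmul, ← Finset.sum_add_distrib, straighten]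

end GenericElt

section Scasimir

open Grassmann

theorem slice_berezin_rTensor_leftDeriv {K ι A : Type*} [Field K] [Fintype ι] [Ring A]
    [Algebra K A] {N : ℕ} (e : Fin N ≃ ι) (a : ι) (y : Grassmann K ι ⊗[K] A) :
    slice (berezin e) ((leftDeriv K a).rTensor A y) = 0 := by
  have comp_eq_zero : berezin (K := K) e ∘ₗ leftDeriv K a = 0 :=
    LinearMap.ext (berezin_leftDeriv e a)
  rw [slice_rTensor, comp_eq_zero, slice, LinearMap.rTensor_zero, LinearMap.comp_zero,
    LinearMap.zero_apply]

variable {K ι A : Type*} [Field K] [Fintype ι] [DecidableEq ι] [Ring A] [Algebra K A]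

/-- The Scasimir of a family `s` and a matrix `g`: the Berezin integral of
`∏_{j<n} (Θ² - (j + 1/2)² ω)`, where `Θ` is the generic odd element and `ω` the quadratic element
of `g`. -/
def scasimir (g : ι → ι → K) (s : ι → A) {n : ℕ} (e : Fin (2 * n) ≃ ι) : A :=
  slice (berezin e) (halfIntProd K (genericElt K s) (quad g ⊗ₜ[K] 1) n)

variable [CharZero K] {g : ι → ι → K} {s : ι → A}

theorem rTensor_leftDeriv_genericElt_mul_halfIntProd (hg : ∀ b c, g c b = -g b c)
    (hs : OspRelations g s) (k : ℕ) (a : ι) :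
    (leftDeriv K a).rTensor A
        (genericElt K s * halfIntProd K (genericElt K s) (quad g ⊗ₜ[K] 1) k)
      = ((k : K) + 1 / 2) •
        (1 ⊗ₜ[K] s a * halfIntProd K (genericElt K s) (quad g ⊗ₜ[K] 1) k
          + halfIntProd K (genericElt K s) (quad g ⊗ₜ[K] 1) k * 1 ⊗ₜ[K] s a) := by
  have hmω : Commute ((1 : Grassmann K ι) ⊗ₜ[K] s a) (quad g ⊗ₜ[K] (1 : A)) := by
    simp only [commute_iff_eq, Algebra.TensorProduct.tmul_mul_tmul, mul_one, one_mul]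
  have deriv_one : (leftDeriv K a).rTensor A 1 = 0 := by
    rw [Algebra.TensorProduct.one_def, LinearMap.rTensor_tmul, leftDeriv_one,
      TensorProduct.zero_tmul]
  have h := map_mul_halfIntProd commute_genericElt_quad hmω (sum_gen_mul_genericElt _)
    (rTensor_leftDeriv_genericElt_mul a) (rTensor_leftDeriv_quad_mul hg a)
    (genericElt_double_anticommutator hs a) k 1
  simpa only [mul_one, deriv_one, mul_zero, sub_zero] using h

theorem mul_scasimir_add_scasimir_mul (hg : ∀ b c, g c b = -g b c) (hs : OspRelations g s)
    {n : ℕ} (e : Fin (2 * n) ≃ ι) (a : ι) : s a * scasimir g s e + scasimir g s e * s a = 0 := by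
  have hn : (n : K) + 1 / 2 ≠ 0 := by
    have half_odd : (n : K) + 1 / 2 = ((2 * n + 1 : ℕ) : K) / 2 := by push_cast; ring
    rw [half_odd]
    exact div_ne_zero (Nat.cast_ne_zero.2 (Nat.succ_ne_zero _)) two_ne_zero
  have h := slice_berezin_rTensor_leftDeriv e a
    (genericElt K s * halfIntProd K (genericElt K s) (quad g ⊗ₜ[K] 1) n)
  rw [rTensor_leftDeriv_genericElt_mul_halfIntProd hg hs, map_smul, map_add, slice_one_tmul_mul,
    slice_mul_one_tmul] at h
  exact (smul_eq_zero.1 h).resolve_left hn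

variable (g s) in
theorem scasimir_sub_skewProd_mem {n : ℕ} (e : Fin (2 * n) ≃ ι) :
    scasimir g s e - skewProd (s ∘ e) ∈ skewSpanLT K s (2 * n) := by
  have top : slice (berezin e) (genericElt K s ^ (2 * n)) = skewProd (s ∘ e) := by
    rw [genericElt_pow_card e, slice_tmul, berezin_word, one_smul]
  have lower : Submodule.span K {x | ∃ j, ∃ p < 2 * n,
      x = (quad g ⊗ₜ[K] (1 : A)) ^ j * genericElt K s ^ p}
      ≤ (skewSpanLT K s (2 * n)).comap (slice (berezin e)) := by
    refine Submodule.span_le.2 ?_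
    rintro _ ⟨j, p, hp, rfl⟩
    rw [SetLike.mem_coe, Submodule.mem_comap, Algebra.TensorProduct.tmul_pow, one_pow,
      slice_tmul_one_mul]
    exact slice_genericElt_pow_mem _ s hp
  rw [← top, scasimir, ← map_sub]
  exact lower (halfIntProd_sub_pow_mem_span commute_genericElt_quad n)

end Scasimir

section Osp

variable (n : ℕ)

theorem gmat_swap (a b : Fin (2 * n)) : gmat n b a = -gmat n a b := by
  unfold gmat
  split_ifs <;> first | (exfalso; omega) | norm_num

theorem ospRelations_σ : OspRelations (gmat n) (σ n) := by
  intro a b c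
  have h := RingQuot.mkAlgHom_rel ℚ (OspRel.rel a b c)
  simp only [map_sub, map_mul, map_add, AlgHom.commutes] at h
  simpa only [σ, Algebra.smul_def] using h

theorem topTuple_injective : Function.Injective (topTuple n) := by
  intro i j h
  have hval := congrArg Fin.val h
  unfold topTuple at hval
  ext
  split_ifs at hval <;> simp only at hval <;> omega

theorem topTuple_bijective : Function.Bijective (topTuple n) :=
  Finite.injective_iff_bijective.1 (topTuple_injective n)

end Osp

theorem add_mul_comm_of_anticommute {A : Type*} [Ring A] {s t x : A} (hs : s * x + x * s = 0)
    (ht : t * x + x * t = 0) : (s * t + t * s) * x = x * (s * t + t * s) := by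
  rw [← sub_eq_zero]
  calc (s * t + t * s) * x - x * (s * t + t * s)
      = s * (t * x + x * t) - (s * x + x * s) * t
        + (t * (s * x + x * s) - (t * x + x * t) * s) := by noncomm_ring
    _ = 0 := by simp only [hs, ht, mul_zero, zero_mul, sub_zero, add_zero]

theorem stmt4_general {K ι A : Type*} [Field K] [CharZero K] [Ring A] [Algebra K A]
    {g : ι → ι → K} {s : ι → A} {n : ℕ} (e : Fin (2 * n) ≃ ι) (hg : ∀ b c, g c b = -g b c)
    (hs : OspRelations g s) :
    ∃ Sc ∈ skewSpan K s,
      (∀ a, s a * Sc + Sc * s a = 0) ∧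
      (∀ a b, (s a * s b + s b * s a) * Sc = Sc * (s a * s b + s b * s a)) ∧
      Sc - skewProd (s ∘ e) ∈ skewSpanLT K s (2 * n) := by
  classical
  have := Fintype.ofEquiv _ e
  have anticomm := mul_scasimir_add_scasimir_mul hg hs e
  have lower := scasimir_sub_skewProd_mem g s e
  have top : skewProd (s ∘ e) ∈ skewSpan K s := Submodule.subset_span ⟨2 * n, e, rfl⟩
  have mem := (Submodule.sub_mem_iff_left _ top).1 (skewSpanLT_le_skewSpan K s _ lower)
  exact ⟨scasimir g s e, mem, anticomm,
    fun a b ↦ add_mul_comm_of_anticommute (anticomm a) (anticomm b), lower⟩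

/-- There is a Scasimir `Sc ∈ Ω`: it anticommutes with all fermionic
generators `σₐ`, commutes with all bosonic generators `σ_{ab}`, and equals
`[1, n+1, 2, n+2, …, n, 2n]` up to a span of lower-order antisymmetrized monomials. -/
theorem stmt4 (n : ℕ) (hn : 1 ≤ n) :
    ∃ Sc ∈ Omega n,
      (∀ a : Fin (2*n), σ n a * Sc + Sc * σ n a = 0) ∧
      (∀ a b : Fin (2*n), σσ n a b * Sc = Sc * σσ n a b) ∧
      Sc - brkt n (2*n) (topTuple n) ∈ lowBrkt n (2*n) :=
  stmt4_general (s := σ n) (.ofBijective _ (topTuple_bijective n)) (gmat_swap n) (ospRelations_σ n)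

end
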